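/- arXiv:2107.07575 — 2 statements merged into one kernel-verified Lean document; each statement's English description precedes it below -/
import Mathlib

section
/- For a unit fraction α, the test with rejection region R_mm satisfies inf over all (δ_x, δ_y) with δ_x δ_y ≠ 0 of P_{(δ_x, δ_y)}((Z_x, Z_y) ∈ R_mm) = α, where (Z_x, Z_y) ~ N((δ_x, δ_y), I₂). -/
/-!
The two-sided p-value `p z = 2Φ(-|z|)` is uniform on `(0, 1)` under the null, and `R_mm` rejects
exactly when both p-values lie in the same cell `((k - 1)α, kα)`, `1 ≤ k ≤ N = 1/α`. Hence the power
is `∑ₖ P_{δ_x}(Cₖ) P_{δ_y}(Cₖ)`, where `Cₖ` is the set of `z` whose p-value lies in the `k`-th cell.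

The `Cₖ` are symmetric sets of equal null mass on which `|z|` decreases with `k`, and on a symmetric
set the likelihood ratio of `N(δ, 1)` against `N(0, 1)` may be replaced by
`exp (-δ² / 2) cosh (δ z)`, which increases with `|z|`. So both factors are antitone in `k` and sum
to one, and Chebyshev's sum inequality bounds the power below by `1/N`. At `δ_x = 0` the power is
exactly `1/N`, and it is continuous in `δ_x`, so the bound is approached along `δ_x → 0`.
-/

open MeasureTheory ProbabilityTheory Set Filter Pointwise

/-- The standard normal cumulative distribution function Φ. -/
noncomputable def stdPhi (x : ℝ) : ℝ := ((gaussianReal 0 1) (Set.Iic x)).toReal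

/-- The inverse Φ⁻¹ of the standard normal CDF. -/
noncomputable def stdPhiInv : ℝ → ℝ := Function.invFun stdPhi

/-- The law of (Z_x, Z_y) ~ N((dx, dy), I₂). -/
noncomputable def gauss2 (dx dy : ℝ) : Measure (ℝ × ℝ) :=
  (gaussianReal dx 1).prod (gaussianReal dy 1)


/-- a_k = Φ⁻¹(k·α/2) where α = 1/N. -/
noncomputable def aseq (N k : ℕ) : ℝ := stdPhiInv ((k : ℝ) / (2 * N))

/-- The interval (a_{k-1}, a_k), with a_0 = -∞ and a_{2N} = ∞. -/
noncomputable def band (N k : ℕ) : Set ℝ :=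
  if k = 1 then Set.Iio (aseq N 1)
  else if k = 2 * N then Set.Ioi (aseq N (2 * N - 1))
  else Set.Ioo (aseq N (k - 1)) (aseq N k)

/-- The minimax rejection region R_mm: diagonal and anti-diagonal open squares. -/
noncomputable def Rmm (N : ℕ) : Set (ℝ × ℝ) :=
  (⋃ k ∈ Finset.Icc 1 (2 * N), band N k ×ˢ band N k) ∪
  (⋃ k ∈ Finset.Icc 1 (2 * N), band N k ×ˢ (-(band N k)))

section Measures

variable {Ω : Type*} [MeasurableSpace Ω] {μ ν : Measure Ω}

lemma sum_measureReal_eq_one_of_absolutelyContinuous [IsProbabilityMeasure μ]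
    [IsProbabilityMeasure ν] (hνμ : ν ≪ μ) {ι : Type*} {s : Finset ι} {A : ι → Set Ω}
    (hd : PairwiseDisjoint (s : Set ι) A) (hA : ∀ i ∈ s, MeasurableSet (A i))
    (hμ : ∑ i ∈ s, μ.real (A i) = 1) : ∑ i ∈ s, ν.real (A i) = 1 := by
  have hU : MeasurableSet (⋃ i ∈ s, A i) := s.measurableSet_biUnion hA
  rw [← measureReal_biUnion_finset hd hA] at hμ ⊢
  have hμ_compl : μ (⋃ i ∈ s, A i)ᶜ = 0 := by
    rw [← measureReal_eq_zero_iff, probReal_compl_eq_one_sub hU, hμ, sub_self]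
  have hν_compl : ν.real (⋃ i ∈ s, A i)ᶜ = 0 := by
    rw [measureReal_eq_zero_iff, hνμ hμ_compl]
  linarith [probReal_compl_eq_one_sub (μ := ν) hU]

lemma measureReal_prod_biUnion_prod {Ω' : Type*} [MeasurableSpace Ω'] {ν' : Measure Ω'}
    [IsFiniteMeasure μ] [IsFiniteMeasure ν'] {ι : Type*} {s : Finset ι} {A : ι → Set Ω}
    {B : ι → Set Ω'} (hd : PairwiseDisjoint (s : Set ι) A) (hA : ∀ i ∈ s, MeasurableSet (A i))
    (hB : ∀ i ∈ s, MeasurableSet (B i)) :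
    (μ.prod ν').real (⋃ i ∈ s, A i ×ˢ B i) = ∑ i ∈ s, μ.real (A i) * ν'.real (B i) := by
  rw [measureReal_biUnion_finset (fun i hi j hj hij => (hd hi hj hij).set_prod_left _ _)
    fun i hi => (hA i hi).prod (hB i hi)]
  simp only [measureReal_prod_prod]

lemma setIntegral_le_setIntegral_of_forall_mem_le [IsFiniteMeasure μ] {f : Ω → ℝ} {S T : Set Ω}
    (hS : MeasurableSet S) (hT : MeasurableSet T) (hfS : IntegrableOn f S μ)
    (hfT : IntegrableOn f T μ) (hμ : μ.real S = μ.real T) (h : ∀ x ∈ S, ∀ y ∈ T, f x ≤ f y) :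
    ∫ x in S, f x ∂μ ≤ ∫ y in T, f y ∂μ := by
  rcases S.eq_empty_or_nonempty with rfl | hS_ne
  · have hT_zero : μ T = 0 := by
      rw [← measureReal_eq_zero_iff, ← hμ, measureReal_empty]
    rw [setIntegral_empty, setIntegral_measure_zero f hT_zero]
  rcases T.eq_empty_or_nonempty with rfl | ⟨y₀, hy₀⟩
  · have hS_zero : μ S = 0 := by
      rw [← measureReal_eq_zero_iff, hμ, measureReal_empty]
    rw [setIntegral_empty, setIntegral_measure_zero f hS_zero]
  set c := sSup (f '' S)
  have hfc : ∀ x ∈ S, f x ≤ c := fun x hx =>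
    le_csSup ⟨f y₀, forall_mem_image.2 fun x hx => h x hx y₀ hy₀⟩ (mem_image_of_mem f hx)
  have hcf : ∀ y ∈ T, c ≤ f y := fun y hy =>
    csSup_le (hS_ne.image f) (forall_mem_image.2 fun x hx => h x hx y hy)
  calc ∫ x in S, f x ∂μ
      ≤ ∫ _ in S, c ∂μ := setIntegral_mono_on hfS (integrable_const c) hS hfc
    _ = ∫ _ in T, c ∂μ := by rw [setIntegral_const, setIntegral_const, hμ]
    _ ≤ ∫ y in T, f y ∂μ := setIntegral_mono_on (integrable_const c) hfT hT hcf

end Measures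

section CDF

variable {μ : Measure ℝ} [IsProbabilityMeasure μ]

lemma strictMono_cdf [μ.IsOpenPosMeasure] : StrictMono (cdf μ) := by
  intro a b hab
  have h_pos : 0 < μ.real (Ioc a b) :=
    ENNReal.toReal_pos ((isOpen_Ioo.measure_pos μ (nonempty_Ioo.2 hab)).trans_le
      (measure_mono Ioo_subset_Ioc_self)).ne' (measure_ne_top μ _)
  have h_diff : μ.real (Ioc a b) = cdf μ b - cdf μ a := by
    rw [cdf_eq_real, cdf_eq_real, ← Iic_sdiff_Iic,
      measureReal_sdiff (Iic_subset_Iic.2 hab.le) measurableSet_Iic]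
  linarith

lemma cdf_mem_Ioo [μ.IsOpenPosMeasure] (x : ℝ) : cdf μ x ∈ Ioo 0 1 :=
  ⟨(cdf_nonneg μ (x - 1)).trans_lt (strictMono_cdf (by linarith)),
    (strictMono_cdf (by linarith)).trans_le (cdf_le_one μ (x + 1))⟩

variable [NullSingletonClass μ]

lemma continuous_cdf : Continuous (cdf μ) := by
  refine continuous_iff_continuousAt.2 fun x => ?_
  rw [(monotone_cdf μ).continuousAt_iff_leftLim_eq_rightLim, StieltjesFunction.rightLim_eq]
  have h_jump : (cdf μ).measure {x} = 0 := by rw [measure_cdf, measure_singleton]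
  rw [StieltjesFunction.measure_singleton, ENNReal.ofReal_eq_zero] at h_jump
  exact le_antisymm ((monotone_cdf μ).leftLim_le le_rfl) (by linarith)

lemma exists_cdf_eq {t : ℝ} (ht : t ∈ Ioo 0 1) : ∃ x, cdf μ x = t := by
  obtain ⟨a, ha⟩ := ((tendsto_cdf_atBot μ).eventually_lt_const ht.1).exists
  obtain ⟨b, hb⟩ := ((tendsto_cdf_atTop μ).eventually_const_lt ht.2).exists
  exact mem_range_of_exists_le_of_exists_ge continuous_cdf ⟨a, ha.le⟩ ⟨b, hb.le⟩

lemma measureReal_cdf_preimage_Iic [μ.IsOpenPosMeasure] {t : ℝ} (ht : t ∈ Ico 0 1) :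
    μ.real (cdf μ ⁻¹' Iic t) = t := by
  rcases ht.1.eq_or_lt with rfl | ht_pos
  · have h_empty : cdf μ ⁻¹' Iic 0 = ∅ :=
      eq_empty_of_forall_notMem fun x hx => (cdf_mem_Ioo x).1.not_ge hx
    rw [h_empty, measureReal_empty]
  · obtain ⟨x, rfl⟩ := exists_cdf_eq (μ := μ) ⟨ht_pos, ht.2⟩
    have h_Iic : cdf μ ⁻¹' Iic (cdf μ x) = Iic x := ext fun y => strictMono_cdf.le_iff_le
    rw [h_Iic, cdf_eq_real]

lemma measureReal_cdf_preimage_Iio [μ.IsOpenPosMeasure] {t : ℝ} (ht : t ∈ Ioc 0 1) :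
    μ.real (cdf μ ⁻¹' Iio t) = t := by
  rcases ht.2.eq_or_lt with rfl | ht_lt
  · have h_univ : cdf μ ⁻¹' Iio 1 = univ := eq_univ_of_forall fun x => (cdf_mem_Ioo x).2
    rw [h_univ, probReal_univ]
  · obtain ⟨x, rfl⟩ := exists_cdf_eq (μ := μ) ⟨ht.1, ht_lt⟩
    have h_Iio : cdf μ ⁻¹' Iio (cdf μ x) = Iio x := ext fun y => strictMono_cdf.lt_iff_lt
    rw [h_Iio, cdf_eq_real, measureReal_congr Iio_ae_eq_Iic]

lemma measureReal_cdf_preimage_Ioo [μ.IsOpenPosMeasure] {s t : ℝ} (hs : 0 ≤ s) (hst : s < t)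
    (ht : t ≤ 1) : μ.real (cdf μ ⁻¹' Ioo s t) = t - s := by
  have h_diff : cdf μ ⁻¹' Ioo s t = cdf μ ⁻¹' Iio t \ cdf μ ⁻¹' Iic s := by
    ext x
    simp only [mem_preimage, mem_Ioo, Set.mem_sdiff, mem_Iio, mem_Iic, not_le, and_comm]
  rw [h_diff, measureReal_sdiff (preimage_mono (Iic_subset_Iio.2 hst))
      (continuous_cdf.measurable measurableSet_Iic),
    measureReal_cdf_preimage_Iio ⟨hs.trans_lt hst, ht⟩,
    measureReal_cdf_preimage_Iic ⟨hs, hst.trans_le ht⟩]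

lemma cdf_neg [μ.IsNegInvariant] (x : ℝ) : cdf μ (-x) = 1 - cdf μ x := by
  rw [cdf_eq_real, cdf_eq_real, ← probReal_compl_eq_one_sub measurableSet_Iic, compl_Iic,
    ← neg_Ici, measureReal_def, Measure.measure_neg, ← measureReal_def,
    measureReal_congr Ioi_ae_eq_Ici]

end CDF

section Gaussian

variable {v : NNReal}

instance instNullSingletonClassGaussianReal [NeZero v] (m : ℝ) :
    NullSingletonClass (gaussianReal m v) :=
  nullSingletonClass_gaussianReal (NeZero.ne v)

instance instIsOpenPosMeasureGaussianReal [NeZero v] (m : ℝ) :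
    (gaussianReal m v).IsOpenPosMeasure :=
  (gaussianReal_absolutelyContinuous' m (NeZero.ne v)).isOpenPosMeasure

instance instIsNegInvariantGaussianRealZero : (gaussianReal 0 v).IsNegInvariant :=
  ⟨gaussianReal_map_neg.trans (by rw [neg_zero])⟩

lemma measureReal_gaussianReal_neg_set (m : ℝ) (S : Set ℝ) :
    (gaussianReal m v).real (-S) = (gaussianReal (-m) v).real S := by
  rw [← gaussianReal_map_neg, measureReal_def, measureReal_def]
  exact congrArg _ ((MeasurableEquiv.neg ℝ).map_apply S).symm

lemma gaussianPDFReal_eq_exp_mul (hv : v ≠ 0) (m z : ℝ) :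
    gaussianPDFReal m v z
      = Real.exp (-m ^ 2 / (2 * v)) * (gaussianPDFReal 0 v z * Real.exp (m / v * z)) := by
  have hv' : (v : ℝ) ≠ 0 := NNReal.coe_ne_zero.2 hv
  rw [gaussianPDFReal, gaussianPDFReal, mul_assoc _ (Real.exp _), ← Real.exp_add, mul_left_comm,
    ← Real.exp_add]
  congr 2
  field_simp
  ring

lemma measureReal_gaussianReal_eq_exp_mul_setIntegral (hv : v ≠ 0) (m : ℝ) {S : Set ℝ}
    (hS : MeasurableSet S) :
    (gaussianReal m v).real S
      = Real.exp (-m ^ 2 / (2 * v)) * ∫ z in S, Real.exp (m / v * z) ∂gaussianReal 0 v := by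
  calc (gaussianReal m v).real S
      = ∫ z in S, gaussianPDFReal m v z := by
        rw [measureReal_def, gaussianReal_apply_eq_integral m hv,
          ENNReal.toReal_ofReal (integral_nonneg (gaussianPDFReal_nonneg m v))]
    _ = Real.exp (-m ^ 2 / (2 * v))
          * ∫ z in S, gaussianPDFReal 0 v z * Real.exp (m / v * z) := by
        simp only [gaussianPDFReal_eq_exp_mul hv m, integral_const_mul]
    _ = Real.exp (-m ^ 2 / (2 * v)) * ∫ z in S, Real.exp (m / v * z) ∂gaussianReal 0 v := by
        rw [← integral_indicator hS, ← integral_indicator hS,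
          integral_gaussianReal_eq_integral_smul hv]
        simp only [smul_eq_mul, indicator_mul_right]

lemma continuous_measureReal_gaussianReal (hv : v ≠ 0) {S : Set ℝ} (hS : MeasurableSet S) :
    Continuous fun m => (gaussianReal m v).real S := by
  have h_mgf : Continuous (mgf id ((gaussianReal 0 v).restrict S)) :=
    continuous_mgf fun t => (integrable_exp_mul_gaussianReal t).restrict
  simp only [measureReal_gaussianReal_eq_exp_mul_setIntegral hv _ hS]
  exact (by fun_prop : Continuous fun m : ℝ => Real.exp (-m ^ 2 / (2 * v))).mul
    (h_mgf.comp (continuous_id.div_const (v : ℝ)))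

lemma integrable_cosh_mul_gaussianReal (m t : ℝ) :
    Integrable (fun z => Real.cosh (t * z)) (gaussianReal m v) := by
  simp only [Real.cosh_eq, ← neg_mul]
  exact ((integrable_exp_mul_gaussianReal t).add (integrable_exp_mul_gaussianReal (-t))).div_const 2

lemma measureReal_gaussianReal_eq_exp_mul_setIntegral_cosh (hv : v ≠ 0) (m : ℝ) {S : Set ℝ}
    (hS : MeasurableSet S) (hS_neg : -S = S) :
    (gaussianReal m v).real S
      = Real.exp (-m ^ 2 / (2 * v)) * ∫ z in S, Real.cosh (m / v * z) ∂gaussianReal 0 v := by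
  have h_neg : (gaussianReal m v).real S = (gaussianReal (-m) v).real S := by
    rw [← measureReal_gaussianReal_neg_set, hS_neg]
  have h_cosh : ∫ z in S, Real.cosh (m / v * z) ∂gaussianReal 0 v
      = (∫ z in S, Real.exp (m / v * z) ∂gaussianReal 0 v
        + ∫ z in S, Real.exp (-m / v * z) ∂gaussianReal 0 v) / 2 := by
    rw [← integral_add (integrable_exp_mul_gaussianReal _).restrict
      (integrable_exp_mul_gaussianReal _).restrict, ← integral_div]
    simp only [Real.cosh_eq, neg_div, neg_mul]
  have h_m := measureReal_gaussianReal_eq_exp_mul_setIntegral hv m hS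
  have h_neg_m := measureReal_gaussianReal_eq_exp_mul_setIntegral hv (-m) hS
  rw [neg_sq, ← h_neg] at h_neg_m
  rw [h_cosh]
  linarith

lemma measureReal_gaussianReal_le_of_forall_abs_le (hv : v ≠ 0) (m : ℝ) {S T : Set ℝ}
    (hS : MeasurableSet S) (hT : MeasurableSet T) (hS_neg : -S = S) (hT_neg : -T = T)
    (h_mass : (gaussianReal 0 v).real S = (gaussianReal 0 v).real T)
    (h_abs : ∀ x ∈ S, ∀ y ∈ T, |x| ≤ |y|) :
    (gaussianReal m v).real S ≤ (gaussianReal m v).real T := by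
  rw [measureReal_gaussianReal_eq_exp_mul_setIntegral_cosh hv m hS hS_neg,
    measureReal_gaussianReal_eq_exp_mul_setIntegral_cosh hv m hT hT_neg]
  refine mul_le_mul_of_nonneg_left ?_ (Real.exp_pos _).le
  refine setIntegral_le_setIntegral_of_forall_mem_le hS hT
    (integrable_cosh_mul_gaussianReal _ _).integrableOn
    (integrable_cosh_mul_gaussianReal _ _).integrableOn h_mass fun x hx y hy => ?_
  rw [Real.cosh_le_cosh, abs_mul, abs_mul]
  exact mul_le_mul_of_nonneg_left (h_abs x hx y hy) (abs_nonneg _)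

end Gaussian

section StandardNormal

lemma stdPhi_eq_cdf : stdPhi = cdf (gaussianReal 0 1) :=
  funext fun x => (cdf_eq_real _ x).symm

lemma strictMono_stdPhi : StrictMono stdPhi := stdPhi_eq_cdf ▸ strictMono_cdf

lemma continuous_stdPhi : Continuous stdPhi := stdPhi_eq_cdf ▸ continuous_cdf

lemma stdPhi_mem_Ioo (x : ℝ) : stdPhi x ∈ Ioo 0 1 := stdPhi_eq_cdf ▸ cdf_mem_Ioo x

lemma stdPhi_neg (x : ℝ) : stdPhi (-x) = 1 - stdPhi x := by rw [stdPhi_eq_cdf, cdf_neg]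

lemma stdPhi_stdPhiInv {t : ℝ} (ht : t ∈ Ioo 0 1) : stdPhi (stdPhiInv t) = t :=
  Function.invFun_eq (stdPhi_eq_cdf ▸ exists_cdf_eq ht)

lemma measureReal_stdPhi_preimage_Ioo {s t : ℝ} (hs : 0 ≤ s) (hst : s < t) (ht : t ≤ 1) :
    (gaussianReal 0 1).real (stdPhi ⁻¹' Ioo s t) = t - s := by
  rw [stdPhi_eq_cdf, measureReal_cdf_preimage_Ioo hs hst ht]

end StandardNormal

section PValue

/-- The two-sided p-value `2Φ(-|z|)` of the test of `δ = 0` based on `Z ~ N(δ, 1)`. -/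
noncomputable def twoSidedPValue (z : ℝ) : ℝ := 2 * stdPhi (-|z|)

lemma continuous_twoSidedPValue : Continuous twoSidedPValue :=
  continuous_const.mul (continuous_stdPhi.comp continuous_abs.neg)

lemma twoSidedPValue_neg (z : ℝ) : twoSidedPValue (-z) = twoSidedPValue z := by
  rw [twoSidedPValue, twoSidedPValue, abs_neg]

lemma twoSidedPValue_lt_twoSidedPValue_iff {z w : ℝ} :
    twoSidedPValue z < twoSidedPValue w ↔ |w| < |z| := by
  rw [twoSidedPValue, twoSidedPValue, mul_lt_mul_iff_right₀ two_pos, strictMono_stdPhi.lt_iff_lt,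
    neg_lt_neg_iff]

lemma twoSidedPValue_preimage_Ioo {s t : ℝ} (ht : t ≤ 1) :
    twoSidedPValue ⁻¹' Ioo s t
      = stdPhi ⁻¹' Ioo (s / 2) (t / 2) ∪ -(stdPhi ⁻¹' Ioo (s / 2) (t / 2)) := by
  ext z
  -- As `Φ(z) + Φ(-z) = 1`, only the smaller of the two can lie below `t / 2 ≤ 1 / 2`.
  have h_neg := stdPhi_neg z
  simp only [mem_preimage, mem_union, Set.mem_neg, mem_Ioo, twoSidedPValue]
  rcases le_total z 0 with hz | hz
  · have h_mono : stdPhi z ≤ stdPhi (-z) := strictMono_stdPhi.monotone (by linarith)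
    rw [abs_of_nonpos hz, neg_neg]
    grind
  · have h_mono : stdPhi (-z) ≤ stdPhi z := strictMono_stdPhi.monotone (by linarith)
    rw [abs_of_nonneg hz]
    grind

lemma measureReal_twoSidedPValue_preimage_Ioo {s t : ℝ} (hs : 0 ≤ s) (hst : s < t) (ht : t ≤ 1) :
    (gaussianReal 0 1).real (twoSidedPValue ⁻¹' Ioo s t) = t - s := by
  have h_disj : Disjoint (stdPhi ⁻¹' Ioo (s / 2) (t / 2)) (-(stdPhi ⁻¹' Ioo (s / 2) (t / 2))) := by
    refine Set.disjoint_left.2 fun z hz hz_neg => ?_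
    have h_upper := hz.2
    have h_upper_neg : stdPhi (-z) < t / 2 := hz_neg.2
    linarith [stdPhi_neg z]
  rw [twoSidedPValue_preimage_Ioo ht,
    measureReal_union h_disj (continuous_stdPhi.measurable measurableSet_Ioo).neg,
    measureReal_gaussianReal_neg_set, neg_zero,
    measureReal_stdPhi_preimage_Ioo (by linarith) (by linarith) (by linarith)]
  ring

/-- The set `Cₖ` of observations whose two-sided p-value lies in the `k`-th of `N` equal cells of
the unit interval, `((k - 1) / N, k / N)`; cells are numbered from `1`, like the bands. -/
noncomputable def pValueCell (N k : ℕ) : Set ℝ :=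
  twoSidedPValue ⁻¹' Ioo (((k : ℝ) - 1) / N) (k / N)

lemma measurableSet_pValueCell (N k : ℕ) : MeasurableSet (pValueCell N k) :=
  continuous_twoSidedPValue.measurable measurableSet_Ioo

lemma neg_pValueCell (N k : ℕ) : -pValueCell N k = pValueCell N k := by
  ext z
  simp only [pValueCell, Set.mem_neg, mem_preimage, twoSidedPValue_neg]

lemma abs_lt_abs_of_mem_pValueCell {N k l : ℕ} (hkl : k < l) {z w : ℝ} (hz : z ∈ pValueCell N k)
    (hw : w ∈ pValueCell N l) : |w| < |z| := by
  have h_le : (k : ℝ) / N ≤ ((l : ℝ) - 1) / N := by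
    have : (k : ℝ) + 1 ≤ l := mod_cast hkl
    gcongr
    linarith
  exact twoSidedPValue_lt_twoSidedPValue_iff.1 (hz.2.trans_le h_le |>.trans hw.1)

lemma pairwise_disjoint_pValueCell (N : ℕ) :
    Pairwise (Function.onFun Disjoint (pValueCell N)) := by
  refine (pairwise_disjoint_on _).2 fun k l hkl => Set.disjoint_left.2 fun z hk hl => ?_
  exact (abs_lt_abs_of_mem_pValueCell hkl hk hl).false

lemma measureReal_gaussianReal_zero_pValueCell {N k : ℕ} (hk : k ∈ Finset.Icc 1 N) :
    (gaussianReal 0 1).real (pValueCell N k) = 1 / N := by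
  obtain ⟨hk_one, hk_le⟩ := Finset.mem_Icc.1 hk
  have hN : (0 : ℝ) < N := mod_cast hk_one.trans hk_le
  have hk_one' : (1 : ℝ) ≤ k := mod_cast hk_one
  have hk_le' : (k : ℝ) ≤ N := mod_cast hk_le
  rw [pValueCell, measureReal_twoSidedPValue_preimage_Ioo (div_nonneg (sub_nonneg.2 hk_one') hN.le)
    (by gcongr; linarith) ((div_le_one hN).2 hk_le')]
  ring

lemma sum_measureReal_pValueCell {N : ℕ} (hN : 0 < N) (d : ℝ) :
    ∑ k ∈ Finset.Icc 1 N, (gaussianReal d 1).real (pValueCell N k) = 1 := by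
  have h_ac : gaussianReal d 1 ≪ gaussianReal 0 1 :=
    (gaussianReal_absolutelyContinuous d one_ne_zero).trans
      (gaussianReal_absolutelyContinuous' 0 one_ne_zero)
  refine sum_measureReal_eq_one_of_absolutelyContinuous h_ac
    ((pairwise_disjoint_pValueCell N).set_pairwise _)
    (fun k _ => measurableSet_pValueCell N k) ?_
  rw [Finset.sum_congr rfl fun k hk => measureReal_gaussianReal_zero_pValueCell hk,
    Finset.sum_const, Nat.card_Icc, Nat.add_sub_cancel, nsmul_eq_mul,
    mul_one_div_cancel (Nat.cast_ne_zero.2 hN.ne')]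

lemma antitoneOn_measureReal_pValueCell (N : ℕ) (d : ℝ) :
    AntitoneOn (fun k => (gaussianReal d 1).real (pValueCell N k)) (Finset.Icc 1 N) := by
  intro k hk l hl hkl
  rcases hkl.eq_or_lt with rfl | hkl
  · exact le_rfl
  refine measureReal_gaussianReal_le_of_forall_abs_le one_ne_zero d (measurableSet_pValueCell N l)
    (measurableSet_pValueCell N k) (neg_pValueCell N l) (neg_pValueCell N k) ?_
    fun w hw z hz => (abs_lt_abs_of_mem_pValueCell hkl hz hw).le
  rw [measureReal_gaussianReal_zero_pValueCell hl, measureReal_gaussianReal_zero_pValueCell hk]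

end PValue

section RejectionRegion

variable {N k : ℕ}

lemma stdPhi_aseq (hk : k ∈ Finset.Ioo 0 (2 * N)) : stdPhi (aseq N k) = k / (2 * N) := by
  obtain ⟨hk_pos, hk_lt⟩ := Finset.mem_Ioo.1 hk
  have hk_pos' : (0 : ℝ) < k := mod_cast hk_pos
  have hk_lt' : (k : ℝ) < 2 * N := mod_cast hk_lt
  have hN : (0 : ℝ) < 2 * N := hk_pos'.trans hk_lt'
  exact stdPhi_stdPhiInv ⟨div_pos hk_pos' hN, (div_lt_one hN).2 hk_lt'⟩

lemma band_eq_stdPhi_preimage (hk : k ∈ Finset.Icc 1 (2 * N)) :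
    band N k = stdPhi ⁻¹' Ioo (((k : ℝ) - 1) / (2 * N)) (k / (2 * N)) := by
  obtain ⟨hk_one, hk_le⟩ := Finset.mem_Icc.1 hk
  have hN : (2 * N : ℝ) ≠ 0 := by
    have : N ≠ 0 := by lia
    positivity
  have h_left (hk' : k ≠ 1) : stdPhi (aseq N (k - 1)) = ((k : ℝ) - 1) / (2 * N) := by
    rw [stdPhi_aseq (Finset.mem_Ioo.2 (by lia)), Nat.cast_pred hk_one]
  have h_right (hk' : k ≠ 2 * N) : stdPhi (aseq N k) = k / (2 * N) :=
    stdPhi_aseq (Finset.mem_Ioo.2 (by lia))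
  ext z
  obtain ⟨hz_pos, hz_lt⟩ := stdPhi_mem_Ioo z
  unfold band
  split_ifs with h_first h_last
  · subst h_first
    rw [mem_preimage, mem_Ioo, ← h_right (by lia), Nat.cast_one, sub_self, zero_div,
      strictMono_stdPhi.lt_iff_lt, and_iff_right hz_pos, mem_Iio]
  · have h_one : (k : ℝ) / (2 * N) = 1 := by
      rw [h_last, Nat.cast_mul, Nat.cast_two, div_self hN]
    rw [mem_preimage, mem_Ioo, h_one, ← h_left h_first, strictMono_stdPhi.lt_iff_lt,
      and_iff_left hz_lt, h_last, mem_Ioi]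
  · rw [mem_preimage, ← h_left h_first, ← h_right h_last, mem_Ioo, mem_Ioo,
      strictMono_stdPhi.lt_iff_lt, strictMono_stdPhi.lt_iff_lt]

lemma neg_band (hk : k ∈ Finset.Icc 1 (2 * N)) : -band N k = band N (2 * N + 1 - k) := by
  obtain ⟨hk_one, hk_le⟩ := Finset.mem_Icc.1 hk
  have hN : (0 : ℝ) < 2 * N := by
    have : 0 < N := by lia
    positivity
  rw [band_eq_stdPhi_preimage hk, band_eq_stdPhi_preimage (Finset.mem_Icc.2 (by lia))]
  ext z
  simp only [Set.mem_neg, mem_preimage, mem_Ioo, stdPhi_neg]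
  rw [Nat.cast_sub (by lia), div_lt_iff₀ hN, lt_div_iff₀ hN, div_lt_iff₀ hN, lt_div_iff₀ hN]
  push_cast
  constructor <;> rintro ⟨h_left, h_right⟩ <;> constructor <;> linarith

lemma band_union_neg_band (hk : k ∈ Finset.Icc 1 N) : band N k ∪ -band N k = pValueCell N k := by
  obtain ⟨hk_one, hk_le⟩ := Finset.mem_Icc.1 hk
  have h_le_one : (k : ℝ) / N ≤ 1 := div_le_one_of_le₀ (mod_cast hk_le) N.cast_nonneg
  rw [pValueCell, twoSidedPValue_preimage_Ioo h_le_one,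
    band_eq_stdPhi_preimage (Finset.mem_Icc.2 (by lia)), div_div, div_div, mul_comm (N : ℝ)]

lemma biUnion_Icc_one_two_mul {α : Type*} (N : ℕ) (A : ℕ → Set α) :
    ⋃ k ∈ Finset.Icc 1 (2 * N), A k = ⋃ k ∈ Finset.Icc 1 N, A k ∪ A (2 * N + 1 - k) := by
  ext x
  simp only [mem_iUnion₂, exists_prop, Finset.mem_Icc, mem_union]
  constructor
  · rintro ⟨k, hk, hx⟩
    rcases le_or_gt k N with hkN | hkN
    · exact ⟨k, by lia, Or.inl hx⟩
    · exact ⟨2 * N + 1 - k, by lia, Or.inr (by rwa [Nat.sub_sub_self (by lia)])⟩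
  · rintro ⟨k, hk, hx | hx⟩
    · exact ⟨k, by lia, hx⟩
    · exact ⟨2 * N + 1 - k, by lia, hx⟩

lemma Rmm_eq_biUnion_pValueCell (N : ℕ) :
    Rmm N = ⋃ k ∈ Finset.Icc 1 N, pValueCell N k ×ˢ pValueCell N k := by
  calc Rmm N
      = ⋃ k ∈ Finset.Icc 1 (2 * N), band N k ×ˢ (band N k ∪ -band N k) := by
        simp only [Rmm, Set.prod_union, iUnion_union_distrib]
    _ = ⋃ k ∈ Finset.Icc 1 N, band N k ×ˢ (band N k ∪ -band N k)
          ∪ band N (2 * N + 1 - k) ×ˢ (band N (2 * N + 1 - k) ∪ -band N (2 * N + 1 - k)) :=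
        biUnion_Icc_one_two_mul N _
    _ = ⋃ k ∈ Finset.Icc 1 N, pValueCell N k ×ˢ pValueCell N k := by
        refine iUnion₂_congr fun k hk => ?_
        have hk' : k ∈ Finset.Icc 1 (2 * N) := Finset.Icc_subset_Icc_right (by lia) hk
        rw [← neg_band hk', neg_neg, union_comm (-band N k), ← union_prod, band_union_neg_band hk]

end RejectionRegion

section Power

variable {N : ℕ}

/-- The power function of the minimax test at level `1 / N`: its rejection probability when
`(Z_x, Z_y) ~ N((δx, δy), I₂)`. -/
noncomputable def mmPower (N : ℕ) (δx δy : ℝ) : ℝ := (gauss2 δx δy).real (Rmm N)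

lemma mmPower_eq_sum (N : ℕ) (δx δy : ℝ) :
    mmPower N δx δy = ∑ k ∈ Finset.Icc 1 N,
      (gaussianReal δx 1).real (pValueCell N k) * (gaussianReal δy 1).real (pValueCell N k) := by
  rw [mmPower, gauss2, Rmm_eq_biUnion_pValueCell, measureReal_prod_biUnion_prod
    ((pairwise_disjoint_pValueCell N).set_pairwise _) (fun k _ => measurableSet_pValueCell N k)
    fun k _ => measurableSet_pValueCell N k]

lemma one_div_le_mmPower (hN : 0 < N) (δx δy : ℝ) : 1 / (N : ℝ) ≤ mmPower N δx δy := by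
  have h_chebyshev := ((antitoneOn_measureReal_pValueCell N δx).monovaryOn
    (antitoneOn_measureReal_pValueCell N δy)).sum_mul_sum_le_card_mul_sum
  rw [sum_measureReal_pValueCell hN, sum_measureReal_pValueCell hN, mul_one, Nat.card_Icc,
    Nat.add_sub_cancel, ← mmPower_eq_sum] at h_chebyshev
  exact (div_le_iff₀' (Nat.cast_pos.2 hN)).2 h_chebyshev

lemma mmPower_zero_left (hN : 0 < N) (δy : ℝ) : mmPower N 0 δy = 1 / N := by
  rw [mmPower_eq_sum, Finset.sum_congr rfl fun k hk => by
    rw [measureReal_gaussianReal_zero_pValueCell hk], ← Finset.mul_sum,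
    sum_measureReal_pValueCell hN, mul_one]

lemma continuous_mmPower_left (N : ℕ) (δy : ℝ) : Continuous fun δx => mmPower N δx δy := by
  simp only [mmPower_eq_sum]
  exact continuous_finsetSum _ fun k _ => (continuous_measureReal_gaussianReal one_ne_zero
    (measurableSet_pValueCell N k)).mul continuous_const

lemma tendsto_mmPower_nhdsNE_zero (hN : 0 < N) (δy : ℝ) :
    Tendsto (fun δx => mmPower N δx δy) (nhdsWithin 0 {0}ᶜ) (nhds (1 / N)) :=
  mmPower_zero_left hN δy ▸ (continuous_mmPower_left N δy).continuousWithinAt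

end Power

/-- For unit fraction α = 1/N, the infimum over the alternative {δ_x δ_y ≠ 0} of the
rejection probability of the minimax test equals α. -/
theorem stmt2 (N : ℕ) (hN : 0 < N) :
    sInf {p : ℝ | ∃ δx δy : ℝ, δx * δy ≠ 0 ∧ p = ((gauss2 δx δy) (Rmm N)).toReal}
      = 1 / (N : ℝ) := by
  refine IsGLB.csInf_eq ⟨?_, fun b hb => ?_⟩ ⟨_, 1, 1, by norm_num, rfl⟩
  · rintro p ⟨δx, δy, -, rfl⟩
    exact one_div_le_mmPower hN δx δy
  · refine ge_of_tendsto (tendsto_mmPower_nhdsNE_zero hN 1) ?_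
    filter_upwards [self_mem_nhdsWithin] with δx hδx
    exact hb ⟨δx, 1, mul_ne_zero hδx one_ne_zero, rfl⟩
end

section
/- There is no measurable rejection region R ⊂ ℝ² that is bounded away from the coordinate axes {(x, y) : xy = 0} (i.e., for some ε > 0, R contains no point with |x| < ε or |y| < ε) and generates a similar test of H₀ : δ_x δ_y = 0 at level α ∈ (0, 1) for the statistic (Z_x, Z_y) ~ N((δ_x, δ_y), I₂). -/
open MeasureTheory ProbabilityTheory Set Filter Pointwise

/-!
The bivariate test is reduced to the completeness of the normal location family. On the axis
`δ_y = 0` the rejection probability is the mean under `N(δ_x, 1)` of the conditional rejection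
probability `x ↦ N(0, 1)(R_x)`, where `R_x` is the slice of `R` over `x`; similarity and
completeness force this function to equal `α` almost everywhere. Over `(-ε, ε)` the slices are
empty, so `α = 0`.

Completeness holds because `N(m, v)` is the tilting of `N(0, v)` by `exp (m x / v)`: if `g` has mean
zero under these laws, the measures with densities `g⁺` and `g⁻` have the same Laplace transform.
These transforms are entire, so it suffices that they agree at parameters accumulating at one point.
-/

open scoped NNReal Topology

lemma map_eq_map_of_frequently_mgf_eq {Ω Ω' : Type*} {mΩ : MeasurableSpace Ω}
    {mΩ' : MeasurableSpace Ω'} {μ : Measure Ω} {ν : Measure Ω'} [IsFiniteMeasure μ]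
    [IsFiniteMeasure ν] {X : Ω → ℝ} {Y : Ω' → ℝ} (hX : AEMeasurable X μ) (hY : AEMeasurable Y ν)
    (hXμ : integrableExpSet X μ = univ) (hYν : integrableExpSet Y ν = univ) {t₀ : ℝ}
    (h : ∃ᶠ t in 𝓝[≠] t₀, mgf X μ t = mgf Y ν t) :
    μ.map X = ν.map Y := by
  have analytic_X : AnalyticOnNhd ℂ (complexMGF X μ) univ :=
    fun z _ ↦ analyticAt_complexMGF (by simp [hXμ])
  have analytic_Y : AnalyticOnNhd ℂ (complexMGF Y ν) univ :=
    fun z _ ↦ analyticAt_complexMGF (by simp [hYν])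
  have tendsto_ofReal : Tendsto ((↑) : ℝ → ℂ) (𝓝[≠] t₀) (𝓝[≠] (t₀ : ℂ)) :=
    (Complex.ofRealCLM.hasDerivAt (x := t₀)).tendsto_nhdsNE (by simp)
  refine Measure.ext_of_complexMGF_eq hX hY (analytic_X.eq_of_frequently_eq analytic_Y
    (z₀ := t₀) (tendsto_ofReal.frequently (h.mono fun t ht ↦ ?_)))
  rw [complexMGF_ofReal, complexMGF_ofReal, ht]

section PositivePart

variable {Ω : Type*} {mΩ : MeasurableSpace Ω} {μ : Measure Ω} {X g : Ω → ℝ} {t : ℝ}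

lemma integrable_exp_mul_max_zero (hint : Integrable (fun ω ↦ Real.exp (t * X ω) * g ω) μ) :
    Integrable (fun ω ↦ Real.exp (t * X ω) * max (g ω) 0) μ := by
  simpa only [mul_max_of_nonneg _ _ (Real.exp_nonneg _), mul_zero] using hint.pos_part

lemma integrable_exp_mul_withDensity_ofReal (hg : AEMeasurable g μ)
    (hint : Integrable (fun ω ↦ Real.exp (t * X ω) * g ω) μ) :
    Integrable (fun ω ↦ Real.exp (t * X ω)) (μ.withDensity fun ω ↦ ENNReal.ofReal (g ω)) := by
  rw [integrable_withDensity_iff_integrable_smul₀' hg.ennreal_ofReal (by simp)]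
  simpa only [ENNReal.toReal_ofReal', smul_eq_mul, mul_comm] using integrable_exp_mul_max_zero hint

lemma mgf_withDensity_ofReal (hg : AEMeasurable g μ) :
    mgf X (μ.withDensity fun ω ↦ ENNReal.ofReal (g ω)) t =
      ∫ ω, Real.exp (t * X ω) * max (g ω) 0 ∂μ := by
  rw [mgf, integral_withDensity_eq_integral_toReal_smul₀ hg.ennreal_ofReal (by simp)]
  simp only [ENNReal.toReal_ofReal', smul_eq_mul, mul_comm]

lemma mgf_withDensity_ofReal_sub_mgf_withDensity_ofReal_neg (hg : AEMeasurable g μ)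
    (hint : Integrable (fun ω ↦ Real.exp (t * X ω) * g ω) μ) :
    mgf X (μ.withDensity fun ω ↦ ENNReal.ofReal (g ω)) t -
      mgf X (μ.withDensity fun ω ↦ ENNReal.ofReal (-g ω)) t =
        ∫ ω, Real.exp (t * X ω) * g ω ∂μ := by
  have hint_neg : Integrable (fun ω ↦ Real.exp (t * X ω) * -g ω) μ := by
    simpa only [mul_neg] using hint.fun_neg
  rw [mgf_withDensity_ofReal hg, mgf_withDensity_ofReal hg.fun_neg,
    ← integral_sub (integrable_exp_mul_max_zero hint) (integrable_exp_mul_max_zero hint_neg)]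
  simp only [← mul_sub, max_zero_sub_max_neg_zero_eq_self]

end PositivePart

theorem ae_eq_zero_of_frequently_integral_exp_mul_eq_zero {μ : Measure ℝ} {g : ℝ → ℝ}
    (hint : ∀ t, Integrable (fun x ↦ Real.exp (t * x) * g x) μ) {t₀ : ℝ}
    (h : ∃ᶠ t in 𝓝[≠] t₀, ∫ x, Real.exp (t * x) * g x ∂μ = 0) :
    g =ᵐ[μ] 0 := by
  have hg : Integrable g μ := by simpa using hint 0
  have hg_neg : Integrable (fun x ↦ -g x) μ := hg.fun_neg
  have hint_neg (t : ℝ) : Integrable (fun x ↦ Real.exp (t * x) * -g x) μ := by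
    simpa only [mul_neg] using (hint t).fun_neg
  have finite_pos := isFiniteMeasure_withDensity_ofReal hg.2
  have finite_neg := isFiniteMeasure_withDensity_ofReal hg_neg.2
  have parts_eq := map_eq_map_of_frequently_mgf_eq aemeasurable_id aemeasurable_id
    (eq_univ_of_forall fun t ↦ integrable_exp_mul_withDensity_ofReal hg.aemeasurable (hint t))
    (eq_univ_of_forall fun t ↦
      integrable_exp_mul_withDensity_ofReal hg_neg.aemeasurable (hint_neg t))
    (h.mono fun t ht ↦ sub_eq_zero.1
      ((mgf_withDensity_ofReal_sub_mgf_withDensity_ofReal_neg hg.aemeasurable (hint t)).trans ht))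
  rw [Measure.map_id, Measure.map_id, withDensity_eq_iff hg.aemeasurable.ennreal_ofReal
    hg_neg.aemeasurable.ennreal_ofReal hg.lintegral_lt_top.ne] at parts_eq
  filter_upwards [parts_eq] with x hx
  rw [Pi.zero_apply, ← max_zero_sub_max_neg_zero_eq_self (g x), ← ENNReal.toReal_ofReal',
    ← ENNReal.toReal_ofReal', sub_eq_zero]
  exact congrArg ENNReal.toReal hx

lemma tilted_mul_gaussianReal (m : ℝ) (v : ℝ≥0) (t : ℝ) :
    (gaussianReal m v).tilted (fun x ↦ t * x) = gaussianReal (m + v * t) v := by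
  rcases eq_or_ne v 0 with rfl | hv
  · rw [gaussianReal_zero_var, tilted_congr (g := fun _ ↦ t * m) (by simp [EventuallyEq])]
    simp
  have integral_exp : ∫ x, Real.exp (t * x) ∂gaussianReal m v =
      Real.exp (m * t + v * t ^ 2 / 2) := congrFun mgf_id_gaussianReal t
  rw [Measure.tilted, integral_exp, gaussianReal_of_var_ne_zero _ hv,
    gaussianReal_of_var_ne_zero _ hv, ← withDensity_mul _ (measurable_gaussianPDF m v)
    (by fun_prop)]
  congr 1 with x
  rw [Pi.mul_apply, gaussianPDF, gaussianPDF, ← ENNReal.ofReal_mul (gaussianPDFReal_nonneg _ _ _),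
    ← Real.exp_sub]
  simp only [gaussianPDFReal, mul_assoc, ← Real.exp_add]
  congr 3
  field_simp
  ring

theorem ae_eq_zero_of_frequently_integral_gaussianReal_eq_zero {v : ℝ≥0} (hv : v ≠ 0) {g : ℝ → ℝ}
    (hint : ∀ m, Integrable g (gaussianReal m v)) {m₀ : ℝ}
    (h : ∃ᶠ m in 𝓝[≠] m₀, ∫ x, g x ∂gaussianReal m v = 0) :
    g =ᵐ[volume] 0 := by
  have hv' : (v : ℝ) ≠ 0 := by exact_mod_cast hv
  have tilted_eq (t : ℝ) : (gaussianReal 0 v).tilted (fun x ↦ t * x) = gaussianReal (v * t) v := by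
    rw [tilted_mul_gaussianReal, zero_add]
  have tendsto_div : Tendsto (fun m : ℝ ↦ m / v) (𝓝[≠] m₀) (𝓝[≠] (m₀ / v)) :=
    ((hasDerivAt_id m₀).div_const (v : ℝ)).tendsto_nhdsNE (by simpa using hv)
  refine (gaussianReal_absolutelyContinuous' 0 hv).ae_eq
    (ae_eq_zero_of_frequently_integral_exp_mul_eq_zero (fun t ↦ ?_)
      (tendsto_div.frequently (h.mono fun m hm ↦ ?_)))
  · simpa only [← tilted_eq, integrable_tilted_iff (integrable_exp_mul_gaussianReal t), smul_eq_mul]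
      using hint (v * t)
  · obtain ⟨t, rfl⟩ : ∃ t, m = v * t := ⟨m / v, (mul_div_cancel₀ m hv').symm⟩
    rw [← tilted_eq, integral_tilted] at hm
    simp only [smul_eq_mul, div_mul_eq_mul_div, integral_div] at hm
    rw [mul_div_cancel_left₀ t hv']
    exact (div_eq_zero_iff.1 hm).resolve_right
      (integral_exp_pos (integrable_exp_mul_gaussianReal t)).ne'

theorem ae_measureReal_slice_eq_of_frequently_gaussianReal_prod_eq {Ω : Type*}
    {mΩ : MeasurableSpace Ω} {ν : Measure Ω} [IsFiniteMeasure ν] {R : Set (ℝ × Ω)}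
    (hR : MeasurableSet R) {v : ℝ≥0} (hv : v ≠ 0) {c m₀ : ℝ}
    (h : ∃ᶠ m in 𝓝[≠] m₀, ((gaussianReal m v).prod ν).real R = c) :
    ∀ᵐ x, ν.real (Prod.mk x ⁻¹' R) = c := by
  have integrable_slice (m : ℝ) :
      Integrable (fun x ↦ ν.real (Prod.mk x ⁻¹' R)) (gaussianReal m v) :=
    Measure.integrable_measure_prodMk_left hR (measure_ne_top _ R)
  have integral_slice (m : ℝ) :
      ∫ x, ν.real (Prod.mk x ⁻¹' R) ∂gaussianReal m v = ((gaussianReal m v).prod ν).real R := by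
    simp only [Measure.real]
    rw [Measure.prod_apply hR, integral_toReal (measurable_measure_prodMk_left hR).aemeasurable
      (ae_of_all _ fun x ↦ measure_lt_top _ _)]
  have slice_sub_eq_zero : (fun x ↦ ν.real (Prod.mk x ⁻¹' R) - c) =ᵐ[volume] 0 :=
    ae_eq_zero_of_frequently_integral_gaussianReal_eq_zero hv
      (fun m ↦ (integrable_slice m).sub (integrable_const c)) (h.mono fun m hm ↦ by
        simp [integral_sub (integrable_slice m) (integrable_const c), integral_slice,
          hm])
  filter_upwards [slice_sub_eq_zero] with x hx using sub_eq_zero.1 hx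

theorem stmt4_general {α δ₀ : ℝ} (hα : α ≠ 0) {R : Set (ℝ × ℝ)} (hR : MeasurableSet R)
    {I : Set ℝ} (hI : volume I ≠ 0) (hRI : ∀ p ∈ R, p.1 ∉ I) :
    ¬ ∃ᶠ δ in 𝓝[≠] δ₀, ((gauss2 δ 0) R).toReal = α := by
  intro hsim
  have slice_eq : ∀ᵐ x, (gaussianReal 0 1).real (Prod.mk x ⁻¹' R) = α :=
    ae_measureReal_slice_eq_of_frequently_gaussianReal_prod_eq hR one_ne_zero hsim
  have slice_empty : ∀ x ∈ I, Prod.mk x ⁻¹' R = ∅ := fun x hx ↦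
    eq_empty_of_forall_notMem fun y hy ↦ hRI (x, y) hy hx
  refine hI (measure_mono_null (fun x hx ↦ ?_) slice_eq)
  simpa [slice_empty x hx] using hα.symm

/-- There is no measurable rejection region bounded away from the coordinate axes that
generates a similar test of H₀ : δ_x δ_y = 0 at level α ∈ (0, 1). -/
theorem stmt4 (α : ℝ) (hα : α ∈ Set.Ioo (0 : ℝ) 1) :
    ¬ ∃ R : Set (ℝ × ℝ), MeasurableSet R ∧
      (∃ ε : ℝ, 0 < ε ∧ ∀ p ∈ R, ε ≤ |p.1| ∧ ε ≤ |p.2|) ∧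
      (∀ δx δy : ℝ, δx * δy = 0 → ((gauss2 δx δy) R).toReal = α) := by
  rintro ⟨R, hR, ⟨ε, hε, hbd⟩, hsim⟩
  exact stmt4_general (δ₀ := 0) hα.1.ne' hR (I := Ioo (-ε) ε) (by simpa using hε)
    (fun p hp hpI ↦ (hbd p hp).1.not_gt (abs_lt.2 hpI)) (.of_forall fun δ ↦ hsim δ 0 (by simp))
end
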